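/- The Gram matrix (h(a_i, a_j))_{1 ≤ i,j ≤ 10} has determinant −243 = −3^5; in particular the hermitian form h on L is nondegenerate. -/

import Mathlib

set_option synthInstance.maxHeartbeats 1000000
set_option maxHeartbeats 1000000

/-- ω = exp(2πi/3), a primitive cube root of unity. -/
noncomputable def omegaC : ℂ := Complex.exp (2 * Real.pi * Complex.I / 3)

/-- The ring of Eisenstein integers E = ℤ[ω], realized as a subalgebra of ℂ. -/
noncomputable def Eis : Subalgebra ℤ ℂ := Algebra.adjoin ℤ {omegaC}

/-- τ := 1 + ω, a primitive sixth root of unity. -/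
noncomputable def tauC : ℂ := 1 + omegaC

/-- θ := 2τ − 1 = ω − ω², so θ² = −3. -/
noncomputable def thetaC : ℂ := 2 * tauC - 1

/-- The Gram matrix of the hermitian lattice L = E^10: diagonal entries −3,
entries θ just above the diagonal, −θ just below it, and 0 elsewhere. -/
noncomputable def gram : Matrix (Fin 10) (Fin 10) ℂ := fun i j =>
  if i = j then -3
  else if (j : ℕ) = (i : ℕ) + 1 then thetaC
  else if (i : ℕ) = (j : ℕ) + 1 then -thetaC
  else 0

/-- The hermitian form h on L = E^10 (ℂ-linear in the first variable, conjugate-linear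
in the second) with Gram matrix `gram` on the standard basis. -/
noncomputable def hermL (x y : Fin 10 → Eis) : ℂ :=
  ∑ i, ∑ j, (x i : ℂ) * gram i j * (starRingEnd ℂ) ((y j : ℂ))

/-- The standard basis a_1, …, a_10 of L = E^10. -/
noncomputable def stdb (i : Fin 10) : Fin 10 → Eis := Pi.single i 1

/-! Write `Dₙ` for the determinant of the `n × n` tridiagonal matrix with constant diagonal `a`,
superdiagonal `b` and subdiagonal `c`. Laplace expansion gives `Dₙ₊₂ = a Dₙ₊₁ - bc Dₙ`. For the
Gram matrix, `a = -3` and `bc = -θ² = 3`, so `a² = 3bc`; then the ratio of the roots of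
`X² - aX + bc` is a primitive sixth root of unity, whence `Dₙ₊₆ = -(bc)³ Dₙ`. As `D₄ = (bc)²`, this
yields `D₁₀ = -(bc)⁵ = -3⁵`. Pairing with the standard basis turns a vector of the radical of `h`
into a left kernel vector of the Gram matrix. -/

open Matrix hiding gram

section TridiagonalToeplitz

variable {R : Type*} [CommRing R] (a b c : R)

/-- The `n × n` tridiagonal Toeplitz matrix with `a` on the diagonal, `b` just above it and `c` just
below it. It embeds the Gram matrix into a family indexed by the size, so that its determinant can
be computed by recursion. -/
def tridiagonalToeplitz (n : ℕ) : Matrix (Fin n) (Fin n) R := fun i j =>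
  if i = j then a
  else if (j : ℕ) = (i : ℕ) + 1 then b
  else if (i : ℕ) = (j : ℕ) + 1 then c
  else 0

lemma tridiagonalToeplitz_succ_succ (n : ℕ) (i j : Fin n) :
    tridiagonalToeplitz a b c (n + 1) i.succ j.succ = tridiagonalToeplitz a b c n i j := by
  simp [tridiagonalToeplitz]

lemma tridiagonalToeplitz_submatrix_succ_succ (n : ℕ) :
    (tridiagonalToeplitz a b c (n + 1)).submatrix Fin.succ Fin.succ =
      tridiagonalToeplitz a b c n :=
  Matrix.ext (tridiagonalToeplitz_succ_succ a b c n)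

lemma det_tridiagonalToeplitz_submatrix_succ_succAbove_one (n : ℕ) :
    ((tridiagonalToeplitz a b c (n + 2)).submatrix Fin.succ (Fin.succAbove 1)).det =
      c * (tridiagonalToeplitz a b c n).det := by
  have minor_eq : ((tridiagonalToeplitz a b c (n + 2)).submatrix Fin.succ
      (Fin.succAbove 1)).submatrix Fin.succ Fin.succ = tridiagonalToeplitz a b c n := by
    ext i j
    simp only [submatrix_apply, ← Fin.succ_zero_eq_one, Fin.succ_succAbove_succ,
      Fin.succAbove_zero, tridiagonalToeplitz_succ_succ]
  rw [det_succ_column_zero, Fin.sum_univ_succ, Finset.sum_eq_zero, Fin.succAbove_zero, minor_eq]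
  · simp [tridiagonalToeplitz]
  · intro i _
    simp [tridiagonalToeplitz]

lemma det_tridiagonalToeplitz_add_two (n : ℕ) :
    (tridiagonalToeplitz a b c (n + 2)).det =
      a * (tridiagonalToeplitz a b c (n + 1)).det
        - b * c * (tridiagonalToeplitz a b c n).det := by
  rw [det_succ_row_zero, Fin.sum_univ_succ, Fin.sum_univ_succ, Finset.sum_eq_zero,
    Fin.succAbove_zero, Fin.succ_zero_eq_one, tridiagonalToeplitz_submatrix_succ_succ,
    det_tridiagonalToeplitz_submatrix_succ_succAbove_one]
  · have entry_zero : tridiagonalToeplitz a b c (n + 2) 0 0 = a := by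
      simp [tridiagonalToeplitz]
    have entry_one : tridiagonalToeplitz a b c (n + 2) 0 1 = b := by
      simp [tridiagonalToeplitz]
    rw [entry_zero, entry_one, Fin.val_zero, Fin.val_one]
    ring
  · intro i _
    simp [tridiagonalToeplitz, (Fin.succ_ne_zero _).symm]

lemma det_tridiagonalToeplitz_zero : (tridiagonalToeplitz a b c 0).det = 1 :=
  det_fin_zero

lemma det_tridiagonalToeplitz_one : (tridiagonalToeplitz a b c 1).det = a := by
  simp [tridiagonalToeplitz]

variable {a b c}

lemma det_tridiagonalToeplitz_add_three (h : a ^ 2 = 3 * (b * c)) (n : ℕ) :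
    (tridiagonalToeplitz a b c (n + 3)).det =
      b * c * (2 * (tridiagonalToeplitz a b c (n + 1)).det
        - a * (tridiagonalToeplitz a b c n).det) := by
  rw [det_tridiagonalToeplitz_add_two a b c (n + 1), det_tridiagonalToeplitz_add_two a b c n]
  linear_combination (tridiagonalToeplitz a b c (n + 1)).det * h

lemma det_tridiagonalToeplitz_four (h : a ^ 2 = 3 * (b * c)) :
    (tridiagonalToeplitz a b c 4).det = (b * c) ^ 2 := by
  have det_two : (tridiagonalToeplitz a b c 2).det = 2 * (b * c) := by
    rw [det_tridiagonalToeplitz_add_two a b c 0, zero_add, det_tridiagonalToeplitz_one,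
      det_tridiagonalToeplitz_zero]
    linear_combination h
  rw [det_tridiagonalToeplitz_add_three h 1, det_two, det_tridiagonalToeplitz_one]
  linear_combination -(b * c) * h

lemma det_tridiagonalToeplitz_add_six (h : a ^ 2 = 3 * (b * c)) (n : ℕ) :
    (tridiagonalToeplitz a b c (n + 6)).det =
      -(b * c) ^ 3 * (tridiagonalToeplitz a b c n).det := by
  rw [det_tridiagonalToeplitz_add_three h (n + 3), det_tridiagonalToeplitz_add_two a b c (n + 2),
    det_tridiagonalToeplitz_add_three h n, det_tridiagonalToeplitz_add_two a b c n]
  linear_combination -(b * c) ^ 2 * (tridiagonalToeplitz a b c n).det * h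

end TridiagonalToeplitz

lemma isPrimitiveRoot_omegaC : IsPrimitiveRoot omegaC 3 :=
  Complex.isPrimitiveRoot_exp 3 three_ne_zero

lemma thetaC_sq : thetaC ^ 2 = -3 := by
  have one_add_omegaC_add_sq : 1 + omegaC + omegaC ^ 2 = 0 := by
    simpa [Finset.sum_range_succ] using isPrimitiveRoot_omegaC.geom_sum_eq_zero (by norm_num)
  rw [thetaC, tauC]
  linear_combination 4 * one_add_omegaC_add_sq

lemma gram_eq_tridiagonalToeplitz : gram = tridiagonalToeplitz (-3) thetaC (-thetaC) 10 :=
  rfl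

lemma det_gram : gram.det = -243 := by
  have mul_neg_thetaC : thetaC * -thetaC = 3 := by
    linear_combination -thetaC_sq
  have sq_diag_eq : (-3 : ℂ) ^ 2 = 3 * (thetaC * -thetaC) := by
    rw [mul_neg_thetaC]
    norm_num
  rw [gram_eq_tridiagonalToeplitz, det_tridiagonalToeplitz_add_six sq_diag_eq 4,
    det_tridiagonalToeplitz_four sq_diag_eq, mul_neg_thetaC]
  norm_num

lemma hermL_eq_dotProduct (x y : Fin 10 → Eis) :
    hermL x y = (fun i => (x i : ℂ)) ᵥ* gram ⬝ᵥ star fun j => (y j : ℂ) := by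
  simp only [hermL, dotProduct, vecMul, Finset.sum_mul]
  exact Finset.sum_comm

lemma hermL_stdb_right (x : Fin 10 → Eis) (j : Fin 10) :
    hermL x (stdb j) = ((fun i => (x i : ℂ)) ᵥ* gram) j := by
  have star_coe_stdb : (star fun k => (stdb j k : ℂ)) = Pi.single j 1 := by
    ext k
    by_cases hk : k = j
    · subst hk
      simp [stdb]
    · simp [stdb, hk]
  rw [hermL_eq_dotProduct, star_coe_stdb, dotProduct_single_one]

lemma eq_zero_of_forall_hermL_eq_zero {x : Fin 10 → Eis} (hx : ∀ y, hermL x y = 0) : x = 0 := by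
  have det_ne_zero : gram.det ≠ 0 := by
    rw [det_gram]
    norm_num
  have vecMul_eq_zero : (fun i => (x i : ℂ)) ᵥ* gram = 0 :=
    funext fun j => (hermL_stdb_right x j).symm.trans (hx (stdb j))
  have coe_eq_zero := eq_zero_of_vecMul_eq_zero det_ne_zero vecMul_eq_zero
  exact funext fun i => Subtype.ext (congrFun coe_eq_zero i)

/-- the Gram matrix (h(a_i,a_j)) has determinant −243 = −3⁵; in particular
the hermitian form h on L is nondegenerate. -/
theorem stmt9 :
    gram.det = -243 ∧
    (∀ x : Fin 10 → Eis, (∀ y : Fin 10 → Eis, hermL x y = 0) → x = 0) :=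
  ⟨det_gram, fun _ => eq_zero_of_forall_hermL_eq_zero⟩
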